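/- arXiv:0804.3015 — 2 statements merged into one kernel-verified Lean document; each statement's English description precedes it below -/
import Mathlib

section
/- Let λ > 0 and define S : ℝ → ℝ by S(x) = (2/(3λ))(1 + (λ/2)x²)^{3/2} − 2/(3λ). Then S is differentiable with S'(x) = x(1 + (λ/2)x²)^{1/2}, and S satisfies the imaginary-time zero-energy Hamilton–Jacobi equation (1/2)(S'(x))² = (1/2)x² + (1/4)λx⁴ for all x ∈ ℝ. -/
/-!
The base `1 + (l / 2) * x ^ 2` is positive because `l > 0`, so the chain rule for real powers
applies at every `x`: the factor `3 / 2` from the exponent and the inner derivative `l * x` cancel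
the prefactor `2 / (3 * l)`. The Hamilton–Jacobi equation follows since positivity also makes the
square of the `1 / 2`-power equal to the base.
-/

/-- **Anharmonic oscillator Hamilton–Jacobi solution.** For `λ > 0`, the function
`S(x) = (2/(3λ))(1 + (λ/2)x²)^{3/2} − 2/(3λ)` is differentiable with derivative
`S'(x) = x (1 + (λ/2)x²)^{1/2}`, and satisfies the imaginary-time zero-energy
Hamilton–Jacobi equation `(1/2)(S'(x))² = (1/2)x² + (1/4)λx⁴`. -/
theorem anharmonic_HJ_solution {l : ℝ} (hl : 0 < l) (S : ℝ → ℝ)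
    (hS : ∀ x : ℝ, S x = (2 / (3 * l)) * (1 + (l / 2) * x ^ 2) ^ ((3 : ℝ) / 2) - 2 / (3 * l)) :
    ∀ x : ℝ,
      HasDerivAt S (x * (1 + (l / 2) * x ^ 2) ^ ((1 : ℝ) / 2)) x ∧
      (1 / 2) * (x * (1 + (l / 2) * x ^ 2) ^ ((1 : ℝ) / 2)) ^ 2
        = (1 / 2) * x ^ 2 + (1 / 4) * l * x ^ 4 := by
  intro x
  have hpos : 0 < 1 + (l / 2) * x ^ 2 := by positivity
  refine ⟨?_, ?_⟩
  · have h1 : HasDerivAt (fun y : ℝ => 1 + (l / 2) * y ^ 2) (l * x) x := by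
      refine (((hasDerivAt_pow 2 x).const_mul (l / 2)).const_add 1).congr_deriv ?_
      norm_num
      ring
    rw [funext hS]
    refine (((h1.rpow_const (p := (3 : ℝ) / 2) (Or.inl hpos.ne')).const_mul
      (2 / (3 * l))).sub_const (2 / (3 * l))).congr_deriv ?_
    rw [show (3 : ℝ) / 2 - 1 = 1 / 2 by norm_num]
    field_simp
  · have h2 : ((1 + (l / 2) * x ^ 2) ^ ((1 : ℝ) / 2)) ^ 2 = 1 + (l / 2) * x ^ 2 := by
      rw [← Real.sqrt_eq_rpow, Real.sq_sqrt hpos.le]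
    rw [mul_pow, h2]
    ring
end

section
/- Let λ > 0 and define ψ : ℝ → ℝ by ψ(x) = exp(−(2/(3λ))(1 + (λ/2)x²)^{3/2} + 2/(3λ)). Then ψ is twice differentiable and satisfies, for all x ∈ ℝ, −(1/2)ψ''(x) + ((1/2)x² + (1/4)λx⁴)ψ(x) = (1/2)[(1 + (λ/2)x²)^{1/2} + ((λ/2)x²)(1 + (λ/2)x²)^{−1/2}] ψ(x). -/
/-!
Write `g x = 1 + (l / 2) * x ^ 2 > 0` and `S x = (2 / (3 l)) * g x ^ (3/2) - 2 / (3 l)`, so that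
`ψ = exp (-S)`. The chain rule gives `S' x = x * g x ^ (1/2)`. Hence `S` solves the
Hamilton–Jacobi equation `S' ^ 2 / 2 = x ^ 2 * g x / 2 = V`. Since
`ψ'' = (S' ^ 2 - S'') * ψ`, we get `-(1/2) ψ'' + V ψ = (1/2) S'' ψ`, where differentiating `S'`
gives `S'' = g ^ (1/2) + (l / 2) * x ^ 2 * g ^ (-1/2)`.
-/

lemma anharmonic_base_pos {l : ℝ} (hl : 0 < l) (x : ℝ) : 0 < 1 + (l / 2) * x ^ 2 := by
  positivity

lemma hasDerivAt_anharmonic_base (l x : ℝ) :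
    HasDerivAt (fun y : ℝ => 1 + (l / 2) * y ^ 2) (l * x) x := by
  have h := (((hasDerivAt_id x).pow 2).const_mul (l / 2)).const_add 1
  refine h.congr_deriv ?_
  simp
  ring

/-- The exponent `-S` has derivative `-S' = -x * g ^ (1/2)`. -/
lemma hasDerivAt_anharmonic_exponent {l : ℝ} (hl : 0 < l) (x : ℝ) :
    HasDerivAt
      (fun y : ℝ => -(2 / (3 * l)) * (1 + (l / 2) * y ^ 2) ^ ((3 : ℝ) / 2) + 2 / (3 * l))
      (-(x * (1 + (l / 2) * x ^ 2) ^ ((1 : ℝ) / 2))) x := by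
  have h := (((hasDerivAt_anharmonic_base l x).rpow_const (p := (3 : ℝ) / 2)
    (Or.inl (anharmonic_base_pos hl x).ne')).const_mul (-(2 / (3 * l)))).add_const (2 / (3 * l))
  refine h.congr_deriv ?_
  rw [show (3 : ℝ) / 2 - 1 = 1 / 2 by norm_num]
  field_simp

/-- `S'' = g ^ (1/2) + (l / 2) * x ^ 2 * g ^ (-1/2)`, as the derivative of `S' = x * g ^ (1/2)`. -/
lemma hasDerivAt_anharmonic_momentum {l : ℝ} (hl : 0 < l) (x : ℝ) :
    HasDerivAt (fun y : ℝ => y * (1 + (l / 2) * y ^ 2) ^ ((1 : ℝ) / 2))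
      ((1 + (l / 2) * x ^ 2) ^ ((1 : ℝ) / 2)
        + ((l / 2) * x ^ 2) * (1 + (l / 2) * x ^ 2) ^ (-(1 : ℝ) / 2)) x := by
  have h := (hasDerivAt_id' x).mul ((hasDerivAt_anharmonic_base l x).rpow_const
    (p := (1 : ℝ) / 2) (Or.inl (anharmonic_base_pos hl x).ne'))
  refine h.congr_deriv ?_
  rw [show (1 : ℝ) / 2 - 1 = -1 / 2 by norm_num]
  ring

/-- **Anharmonic oscillator zero-energy ground state.** For `λ > 0`, the function
`ψ(x) = exp(−(2/(3λ))(1 + (λ/2)x²)^{3/2} + 2/(3λ))` is twice differentiable and satisfies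
`−(1/2)ψ'' + ((1/2)x² + (1/4)λx⁴)ψ
  = (1/2)[(1 + (λ/2)x²)^{1/2} + ((λ/2)x²)(1 + (λ/2)x²)^{−1/2}]ψ`. -/
theorem anharmonic_ground_state {l : ℝ} (hl : 0 < l) (ψ : ℝ → ℝ)
    (hψ : ∀ x : ℝ, ψ x =
      Real.exp (-(2 / (3 * l)) * (1 + (l / 2) * x ^ 2) ^ ((3 : ℝ) / 2) + 2 / (3 * l))) :
    (∀ x : ℝ, DifferentiableAt ℝ ψ x) ∧ (∀ x : ℝ, DifferentiableAt ℝ (deriv ψ) x) ∧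
    ∀ x : ℝ,
      -(1 / 2) * deriv (deriv ψ) x + ((1 / 2) * x ^ 2 + (1 / 4) * l * x ^ 4) * ψ x
        = (1 / 2) * ((1 + (l / 2) * x ^ 2) ^ ((1 : ℝ) / 2)
            + ((l / 2) * x ^ 2) * (1 + (l / 2) * x ^ 2) ^ (-(1 : ℝ) / 2)) * ψ x := by
  have h1 : ∀ x, HasDerivAt ψ (-(x * (1 + (l / 2) * x ^ 2) ^ ((1 : ℝ) / 2)) * ψ x) x := by
    intro x
    have h := (hasDerivAt_anharmonic_exponent hl x).exp
    rw [← hψ x, ← funext hψ] at h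
    exact h.congr_deriv (mul_comm _ _)
  have hd : deriv ψ = fun x => -(x * (1 + (l / 2) * x ^ 2) ^ ((1 : ℝ) / 2)) * ψ x :=
    funext fun x => (h1 x).deriv
  have h2 : ∀ x, HasDerivAt (deriv ψ) _ x := fun x => by
    rw [hd]
    exact (hasDerivAt_anharmonic_momentum hl x).neg.mul (h1 x)
  refine ⟨fun x => (h1 x).differentiableAt, fun x => (h2 x).differentiableAt, fun x => ?_⟩
  rw [(h2 x).deriv]
  have hsq : ((1 + (l / 2) * x ^ 2) ^ ((1 : ℝ) / 2)) ^ 2 = 1 + (l / 2) * x ^ 2 := by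
    rw [← Real.sqrt_eq_rpow, Real.sq_sqrt (anharmonic_base_pos hl x).le]
  simp only [Pi.neg_apply]
  -- The terms with `S''` agree; what remains is the Hamilton–Jacobi equation times `ψ`.
  linear_combination (-(1 / 2) * x ^ 2 * ψ x) * hsq
end
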